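/- Let L be a timed language recognized by a K-acceptor, and let u, v ∈ (Σ_K)* be small half-integral words. Then u ≈^{L,K} v if and only if c^K_⊤(u) = c^K_⊤(v) and for every word z ∈ (Σ_K)*, uz ∈ L if and only if vz ∈ L. -/

import Mathlib

open scoped NNReal Classical

namespace IRTA

/-- A timestamp is a finite sequence of non-negative reals. -/
abbrev Timestamp : Type := List ℝ≥0

/-- A timed word is a finite sequence of (delay, letter) pairs. -/
abbrev TimedWord (A : Type) : Type := List (ℝ≥0 × A)

/-- Fractional part of a non-negative real. -/
noncomputable def fracPart (x : ℝ≥0) : ℝ≥0 := x - (⌊x⌋₊ : ℝ≥0)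

/-- `x` is a natural-number value. -/
def IsNatVal (x : ℝ≥0) : Prop := ∃ m : ℕ, x = (m : ℝ≥0)

/-- Region equivalence `≡^K`. -/
def RegEq (K : ℕ) (x y : ℝ≥0) : Prop :=
  (⌊x⌋₊ = ⌊y⌋₊ ∧ (fracPart x = 0 ↔ fracPart y = 0)) ∨ ((K : ℝ≥0) < x ∧ (K : ℝ≥0) < y)

/-- One step of the (greedy) clock evolution: reset whenever the value is an
integer between `0` and `K`. -/
noncomputable def resetStep (K : ℕ) (v : ℝ≥0) : ℝ≥0 :=
  if ∃ m : ℕ, m ≤ K ∧ v = (m : ℝ≥0) then 0 else v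

/-- Auxiliary function computing `c^K` with accumulator `v`. -/
noncomputable def cKAux (K : ℕ) : ℝ≥0 → Timestamp → ℝ≥0
  | v, [] => v
  | v, t :: d => cKAux K (resetStep K (v + t)) d

/-- `c^K(d)`: the sum of the delays after the last integral position of `d`. -/
noncomputable def cK (K : ℕ) (d : Timestamp) : ℝ≥0 := cKAux K 0 d

/-- `c^K` of a timed word is `c^K` of its timestamp. -/
noncomputable def cKW {A : Type} (K : ℕ) (w : TimedWord A) : ℝ≥0 :=
  cK K (w.map Prod.fst)

/-- `c^K_⊤` : `c^K` truncated at `K`. -/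
noncomputable def cKTop {A : Type} (K : ℕ) (w : TimedWord A) : WithTop ℝ≥0 :=
  if cKW K w ≤ (K : ℝ≥0) then ((cKW K w : ℝ≥0) : WithTop ℝ≥0) else ⊤

/-! ### Clock constraints and one-clock timed automata -/

/-- Clock constraints `φ ::= x < m | m < x | x = m | φ ∧ φ`. -/
inductive CC : Type where
  | lt : ℕ → CC
  | gt : ℕ → CC
  | eq : ℕ → CC
  | and : CC → CC → CC

/-- Satisfaction of a clock constraint by a clock value. -/
def CC.sat : CC → ℝ≥0 → Prop
  | .lt m, x => x < (m : ℝ≥0)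
  | .gt m, x => (m : ℝ≥0) < x
  | .eq m, x => x = (m : ℝ≥0)
  | .and φ ψ, x => φ.sat x ∧ ψ.sat x

/-- The largest constant appearing in a clock constraint. -/
def CC.maxConst : CC → ℕ
  | .lt m => m
  | .gt m => m
  | .eq m => m
  | .and φ ψ => max φ.maxConst ψ.maxConst

/-- A transition of a one-clock timed automaton; `reset = true` means the
clock is reset (the `r = 0` case). -/
structure TTrans (Q A : Type) where
  src : Q
  dst : Q
  lab : A
  guard : CC
  reset : Bool

/-- A one-clock timed automaton. -/
structure TA (A : Type) where
  Q : Type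
  init : Q
  final : Set Q
  trans : Set (TTrans Q A)

/-- The automaton has finitely many states and transitions. -/
def TA.IsFinite {A : Type} (M : TA A) : Prop := Finite M.Q ∧ M.trans.Finite

/-- Runs of a one-clock timed automaton between configurations. -/
inductive Steps {A : Type} (M : TA A) : M.Q × ℝ≥0 → TimedWord A → M.Q × ℝ≥0 → Prop
  | nil (c : M.Q × ℝ≥0) : Steps M c [] c
  | cons {q : M.Q} {ν t : ℝ≥0} {a : A} {w : TimedWord A} {c : M.Q × ℝ≥0}
      (θ : TTrans M.Q A) (hθ : θ ∈ M.trans) (hsrc : θ.src = q) (hlab : θ.lab = a)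
      (hg : θ.guard.sat (ν + t))
      (hrest : Steps M (θ.dst, if θ.reset then 0 else ν + t) w c) :
      Steps M (q, ν) ((t, a) :: w) c

/-- The language of `M` from a given configuration. -/
def TA.LangFrom {A : Type} (M : TA A) (c : M.Q × ℝ≥0) : Set (TimedWord A) :=
  {w | ∃ q' : M.Q, ∃ ν' : ℝ≥0, Steps M c w (q', ν') ∧ q' ∈ M.final}

/-- The language of `M` (from the initial configuration). -/
def TA.Lang {A : Type} (M : TA A) : Set (TimedWord A) := M.LangFrom (M.init, 0)

/-- Determinism: distinct transitions with the same source and letter have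
disjoint guards. -/
def TA.Deterministic {A : Type} (M : TA A) : Prop :=
  ∀ θ₁ ∈ M.trans, ∀ θ₂ ∈ M.trans, θ₁ ≠ θ₂ → θ₁.src = θ₂.src → θ₁.lab = θ₂.lab →
    ∀ x : ℝ≥0, ¬ (θ₁.guard.sat x ∧ θ₂.guard.sat x)

/-- Completeness: every timed word admits a run from the initial configuration. -/
def TA.Complete {A : Type} (M : TA A) : Prop :=
  ∀ w : TimedWord A, ∃ c : M.Q × ℝ≥0, Steps M (M.init, 0) w c

/-- A 1-IRTA: every resetting transition has an equality guard. -/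
def TA.IsIRTA {A : Type} (M : TA A) : Prop :=
  ∀ θ ∈ M.trans, θ.reset = true → ∃ m : ℕ, θ.guard = CC.eq m

/-- Guards allowed in a strict 1-IRTA with constant `K`. -/
def StrictGuard (K : ℕ) (φ : CC) : Prop :=
  (∃ m : ℕ, φ = CC.eq m) ∨ (∃ m : ℕ, φ = CC.and (CC.gt m) (CC.lt (m + 1))) ∨ φ = CC.gt K

/-- Strictness with constant `K`: every guard is of one of the allowed forms
and a guard is an equality iff the transition resets. -/
def TA.IsStrict {A : Type} (M : TA A) (K : ℕ) : Prop :=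
  ∀ θ ∈ M.trans, StrictGuard K θ.guard ∧ ((∃ m : ℕ, θ.guard = CC.eq m) ↔ θ.reset = true)

/-- All constants appearing in guards are at most `K`. -/
def TA.MaxConstLE {A : Type} (M : TA A) (K : ℕ) : Prop :=
  ∀ θ ∈ M.trans, θ.guard.maxConst ≤ K

/-- `M` reaches the same control state on reading `u` and `v` from the initial
configuration. -/
def TA.SameState {A : Type} (M : TA A) (u v : TimedWord A) : Prop :=
  ∃ q : M.Q, ∃ ν ν' : ℝ≥0, Steps M (M.init, 0) u (q, ν) ∧ Steps M (M.init, 0) v (q, ν')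

/-- A `K`-acceptor. -/
def IsKAcceptor {A : Type} (M : TA A) (K : ℕ) : Prop :=
  M.IsFinite ∧ M.Complete ∧ M.Deterministic ∧ M.IsIRTA ∧ M.IsStrict K ∧ M.MaxConstLE K ∧
    ∀ u v : TimedWord A, M.SameState u v → RegEq K (cKW K u) (cKW K v)

/-! ### Equivalences on timed words -/

/-- `L`-preservation of a relation on timed words. -/
def LPreserving {A : Type} (L : Set (TimedWord A)) (r : TimedWord A → TimedWord A → Prop) :
    Prop :=
  ∀ u v : TimedWord A, r u v → (u ∈ L ↔ v ∈ L)

/-- `K`-monotonicity of a relation on timed words. -/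
def KMonotonic {A : Type} (K : ℕ) (r : TimedWord A → TimedWord A → Prop) : Prop :=
  ∀ u v : TimedWord A, r u v →
    RegEq K (cKW K u) (cKW K v) ∧
      ∀ (a : A) (t t' : ℝ≥0), RegEq K (cKW K u + t) (cKW K v + t') →
        r (u ++ [(t, a)]) (v ++ [(t', a)])

/-- Finite index: there are finitely many classes `{v | r u v}`. -/
def FiniteIndex {A : Type} (r : TimedWord A → TimedWord A → Prop) : Prop :=
  Set.Finite (Set.range fun u : TimedWord A => {v : TimedWord A | r u v})

/-! ### The rescaling maps -/

/-- The bijection `f_{λ→λ'}` of the open unit interval. -/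
noncomputable def fScale (lam lam' t : ℝ≥0) : ℝ≥0 :=
  if t ≤ lam then (lam' / lam) * t else lam' + ((1 - lam') / (1 - lam)) * (t - lam)

/-- The new delay `t'` computed from the current clock values `y, y'` and delay `t`. -/
noncomputable def tauStep (K : ℕ) (y y' t : ℝ≥0) : ℝ≥0 :=
  if (IsNatVal y ∧ IsNatVal y') ∨ ((K : ℝ≥0) < y ∧ (K : ℝ≥0) < y') then t
  else (⌊t⌋₊ : ℝ≥0) + fScale (1 - fracPart y) (1 - fracPart y') (fracPart t)

/-- Auxiliary rescaling map on timestamps, carrying the current clock values. -/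
noncomputable def tauAux (K : ℕ) : ℝ≥0 → ℝ≥0 → Timestamp → Timestamp
  | _, _, [] => []
  | y, y', t :: d =>
      tauStep K y y' t ::
        tauAux K (resetStep K (y + t)) (resetStep K (y' + tauStep K y y' t)) d

/-- The rescaling map `τ_{x→x'}` on timestamps. -/
noncomputable def tau (K : ℕ) (x x' : ℝ≥0) (d : Timestamp) : Timestamp :=
  tauAux K (resetStep K x) (resetStep K x') d

/-- Auxiliary rescaling map on timed words. -/
noncomputable def tauWAux {A : Type} (K : ℕ) : ℝ≥0 → ℝ≥0 → TimedWord A → TimedWord A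
  | _, _, [] => []
  | y, y', (t, a) :: w =>
      (tauStep K y y' t, a) ::
        tauWAux K (resetStep K (y + t)) (resetStep K (y' + tauStep K y y' t)) w

/-- The rescaling map `τ_{x→x'}` on timed words. -/
noncomputable def tauW {A : Type} (K : ℕ) (x x' : ℝ≥0) (w : TimedWord A) : TimedWord A :=
  tauWAux K (resetStep K x) (resetStep K x') w

/-! ### Residuals and the syntactic equivalence -/

/-- The residual language `u^{-1}L`. -/
def residual {A : Type} (L : Set (TimedWord A)) (u : TimedWord A) : Set (TimedWord A) :=
  {w : TimedWord A | u ++ w ∈ L}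

/-- The syntactic equivalence `≈^{L,K}`. -/
def ApproxLK {A : Type} (L : Set (TimedWord A)) (K : ℕ) (u v : TimedWord A) : Prop :=
  RegEq K (cKW K u) (cKW K v) ∧
    (tauW K (cKW K u) (cKW K v)) '' (residual L u) = residual L v

/-! ### The automaton built from a monotonic equivalence -/

/-- The region guard `φ([t])`. -/
noncomputable def phiOf (K : ℕ) (t : ℝ≥0) : CC :=
  if t ≤ (K : ℝ≥0) then
    (if IsNatVal t then CC.eq ⌊t⌋₊ else CC.and (CC.gt ⌊t⌋₊) (CC.lt (⌊t⌋₊ + 1)))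
  else CC.gt K

/-- The automaton `A_≈` built from an equivalence `s` on timed words. -/
noncomputable def Aapprox {A : Type} (L : Set (TimedWord A)) (K : ℕ)
    (s : Setoid (TimedWord A)) : TA A where
  Q := Quotient s
  init := Quotient.mk s ([] : TimedWord A)
  final := {q : Quotient s | ∃ u : TimedWord A, q = Quotient.mk s u ∧ u ∈ L}
  trans := {θ : TTrans (Quotient s) A |
    ∃ (u : TimedWord A) (a : A) (t : ℝ≥0),
      θ.src = Quotient.mk s u ∧ θ.dst = Quotient.mk s (u ++ [(t, a)]) ∧ θ.lab = a ∧
      θ.guard = phiOf K (cKW K u + t) ∧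
      (θ.reset = true ↔ ∃ m : ℕ, m ≤ K ∧ cKW K u + t = (m : ℝ≥0))}

/-! ### Half-integral and small words -/

/-- Every delay has fractional part `0` or `1/2`. -/
def HalfIntegral {A : Type} (w : TimedWord A) : Prop :=
  ∀ p ∈ w, fracPart p.1 = 0 ∨ fracPart p.1 = 1 / 2

/-- Every delay is `< K + 1`. -/
def SmallWord {A : Type} (K : ℕ) (w : TimedWord A) : Prop :=
  ∀ p ∈ w, p.1 < (K : ℝ≥0) + 1

/-- The delays of `Σ_K`: half-integral values `≤ K + 1/2`. -/
def IsSigmaK (K : ℕ) (t : ℝ≥0) : Prop :=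
  (fracPart t = 0 ∨ fracPart t = 1 / 2) ∧ t ≤ (K : ℝ≥0) + 1 / 2

/-- Words over `Σ_K` (small half-integral words). -/
def SigmaWord {A : Type} (K : ℕ) (w : TimedWord A) : Prop :=
  ∀ p ∈ w, IsSigmaK K p.1



/-! ### `K`-acceptors with their region representatives -/

/-- A `K`-acceptor bundled with the half-integral representative of the
unique region of each state. -/
structure KAcc (A : Type) (K : ℕ) where
  M : TA A
  acc : IsKAcceptor M K
  reg : M.Q → ℝ≥0
  regHalf : ∀ q : M.Q, fracPart (reg q) = 0 ∨ fracPart (reg q) = 1 / 2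
  regLe : ∀ q : M.Q, reg q ≤ (K : ℝ≥0) + 1 / 2
  regSpec : ∀ (w : TimedWord A) (q : M.Q) (x : ℝ≥0),
    Steps M (M.init, 0) w (q, x) → RegEq K x (reg q)

/-- The minimization equivalences `∼^i` on the states of a `K`-acceptor. -/
def simEq {A : Type} {K : ℕ} (B : KAcc A K) : ℕ → B.M.Q → B.M.Q → Prop
  | 0, p, q => B.reg p = B.reg q ∧ (p ∈ B.M.final ↔ q ∈ B.M.final)
  | i + 1, p, q => simEq B i p q ∧
      ∀ (t : ℝ≥0) (a : A), IsSigmaK K t →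
        ∀ θ₁ θ₂ : TTrans B.M.Q A, θ₁ ∈ B.M.trans → θ₂ ∈ B.M.trans →
          θ₁.src = p → θ₂.src = q → θ₁.lab = a → θ₂.lab = a →
          θ₁.guard = phiOf K t → θ₂.guard = phiOf K t →
          simEq B i θ₁.dst θ₂.dst

/-- The quotient automaton `B/∼^m`. -/
noncomputable def quotTA {A : Type} {K : ℕ} (B : KAcc A K) (m : ℕ) : TA A where
  Q := Quot (simEq B m)
  init := Quot.mk (simEq B m) B.M.init
  final := {c : Quot (simEq B m) | ∃ q ∈ B.M.final, c = Quot.mk (simEq B m) q}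
  trans := {θ : TTrans (Quot (simEq B m)) A |
    ∃ θ₀ ∈ B.M.trans,
      θ.src = Quot.mk (simEq B m) θ₀.src ∧ θ.dst = Quot.mk (simEq B m) θ₀.dst ∧
      θ.lab = θ₀.lab ∧ θ.guard = θ₀.guard ∧ θ.reset = θ₀.reset}

/-! ### Observation tables -/

/-- An observation table over `Σ_K`. -/
structure ObsTable (A : Type) (K : ℕ) where
  U1 : Set (TimedWord A)
  E : Set (TimedWord A)
  val : TimedWord A → TimedWord A → Bool
  U1fin : U1.Finite
  Efin : E.Finite
  U1sigma : ∀ u ∈ U1, SigmaWord K u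
  Esigma : ∀ e ∈ E, SigmaWord K e
  epsU1 : ([] : TimedWord A) ∈ U1
  prefixClosed : ∀ (u : TimedWord A) (x : ℝ≥0 × A), u ++ [x] ∈ U1 → u ∈ U1
  epsE : ([] : TimedWord A) ∈ E
  suffixClosed : ∀ (x : ℝ≥0 × A) (e : TimedWord A), x :: e ∈ E → e ∈ E

/-- The set `U2` of one-letter `Σ_K`-extensions of `U1`. -/
def obsU2 {A : Type} {K : ℕ} (T : ObsTable A K) : Set (TimedWord A) :=
  {w : TimedWord A | ∃ u ∈ T.U1, ∃ (t : ℝ≥0) (a : A), IsSigmaK K t ∧ w = u ++ [(t, a)]}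

/-- `R(u)`: the row of `u` (restricted to `E`) together with `c^K_⊤(u)`. -/
noncomputable def Rof {A : Type} {K : ℕ} (T : ObsTable A K) (u : TimedWord A) :
    ({e : TimedWord A // e ∈ T.E} → Bool) × WithTop ℝ≥0 :=
  (fun e => T.val u e.1, cKTop K u)

/-- The table is closed. -/
def ObsTable.Closed {A : Type} {K : ℕ} (T : ObsTable A K) : Prop :=
  ∀ w ∈ obsU2 T, ∃ u ∈ T.U1, Rof T w = Rof T u

/-- The table is consistent. -/
def ObsTable.Consistent {A : Type} {K : ℕ} (T : ObsTable A K) : Prop :=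
  ∀ u ∈ T.U1, ∀ w ∈ T.U1, Rof T u = Rof T w →
    ∀ (t : ℝ≥0) (a : A), IsSigmaK K t → Rof T (u ++ [(t, a)]) = Rof T (w ++ [(t, a)])

/-- The automaton `A_𝒯` induced by a (closed and consistent) observation table. -/
noncomputable def ATable {A : Type} {K : ℕ} (T : ObsTable A K) : TA A where
  Q := {f : ({e : TimedWord A // e ∈ T.E} → Bool) × WithTop ℝ≥0 // ∃ u ∈ T.U1, f = Rof T u}
  init := ⟨Rof T [], ⟨[], T.epsU1, rfl⟩⟩
  final := {q | ∃ u ∈ T.U1, q.1 = Rof T u ∧ T.val u [] = true}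
  trans := {θ | ∃ u ∈ T.U1, ∃ (t : ℝ≥0) (a : A), IsSigmaK K t ∧
      θ.src.1 = Rof T u ∧ θ.dst.1 = Rof T (u ++ [(t, a)]) ∧ θ.lab = a ∧
      θ.guard = phiOf K (cKW K u + t) ∧
      (θ.reset = true ↔ ∃ m : ℕ, m ≤ K ∧ cKW K u + t = (m : ℝ≥0))}

/-- A `K`-acceptor is consistent with the observation table `𝒯`. -/
def ConsistentWith {A : Type} {K : ℕ} (M : TA A) (T : ObsTable A K) : Prop :=
  ∀ w : TimedWord A, (w ∈ T.U1 ∨ w ∈ obsU2 T) → ∀ e ∈ T.E,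
    ∀ (q : M.Q) (ν : ℝ≥0), Steps M (M.init, 0) (w ++ e) (q, ν) →
      (q ∈ M.final ↔ T.val w e = true)

/-- Isomorphism of one-clock timed automata. -/
structure TAIso {A : Type} (M N : TA A) where
  toEquiv : M.Q ≃ N.Q
  init_eq : toEquiv M.init = N.init
  final_iff : ∀ q : M.Q, q ∈ M.final ↔ toEquiv q ∈ N.final
  trans_iff : ∀ θ : TTrans M.Q A,
    θ ∈ M.trans ↔
      (⟨toEquiv θ.src, toEquiv θ.dst, θ.lab, θ.guard, θ.reset⟩ : TTrans N.Q A) ∈ N.trans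


/-- Region equivalence in terms of comparisons with constants. -/
def Rg (K : ℕ) (x y : ℝ≥0) : Prop :=
  ∀ m : ℕ, m ≤ K → (((m : ℝ≥0) < x ↔ (m : ℝ≥0) < y) ∧ (x < (m : ℝ≥0) ↔ y < (m : ℝ≥0)))

/-- Half-integrality of a value. -/
def Half (x : ℝ≥0) : Prop := ∃ n : ℕ, 2 * x = (n : ℝ≥0)

theorem Rg.rfl' {K : ℕ} (x : ℝ≥0) : Rg K x x := fun _ _ => ⟨Iff.rfl, Iff.rfl⟩

theorem Rg.symm' {K : ℕ} {x y : ℝ≥0} (h : Rg K x y) : Rg K y x :=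
  fun m hm => ⟨(h m hm).1.symm, (h m hm).2.symm⟩

theorem Rg.big {K : ℕ} {x y : ℝ≥0} (hx : (K : ℝ≥0) < x) (hy : (K : ℝ≥0) < y) : Rg K x y := by
  intro m hm
  have hm' : (m : ℝ≥0) ≤ (K : ℝ≥0) := by exact_mod_cast hm
  have h1 := lt_of_le_of_lt hm' hx
  have h2 := lt_of_le_of_lt hm' hy
  exact ⟨⟨fun _ => h2, fun _ => h1⟩, ⟨fun h => absurd h h1.not_gt, fun h => absurd h h2.not_gt⟩⟩

theorem Rg.eq_nat {K : ℕ} {x y : ℝ≥0} (h : Rg K x y) {m : ℕ} (hm : m ≤ K)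
    (hx : x = (m : ℝ≥0)) : y = (m : ℝ≥0) := by
  obtain ⟨h1, h2⟩ := h m hm
  subst hx
  apply le_antisymm
  · exact not_lt.mp (fun h => lt_irrefl _ (h1.mpr h))
  · exact not_lt.mp (fun h => lt_irrefl _ (h2.mpr h))

theorem Rg.reset {K : ℕ} {x y : ℝ≥0} (h : Rg K x y) :
    Rg K (resetStep K x) (resetStep K y) := by
  unfold resetStep
  by_cases hx : ∃ m : ℕ, m ≤ K ∧ x = (m : ℝ≥0)
  · have hy : ∃ m : ℕ, m ≤ K ∧ y = (m : ℝ≥0) := by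
      obtain ⟨m, hm, e⟩ := hx
      exact ⟨m, hm, h.eq_nat hm e⟩
    rw [if_pos hx, if_pos hy]
    exact Rg.rfl' 0
  · have hy : ¬ ∃ m : ℕ, m ≤ K ∧ y = (m : ℝ≥0) := by
      rintro ⟨m, hm, e⟩
      exact hx ⟨m, hm, h.symm'.eq_nat hm e⟩
    rw [if_neg hx, if_neg hy]
    exact h

theorem resetStep_big {K : ℕ} {x : ℝ≥0} (hx : (K : ℝ≥0) < x) : resetStep K x = x := by
  unfold resetStep
  rw [if_neg]
  rintro ⟨m, hm, e⟩
  have hm' : (m : ℝ≥0) ≤ (K : ℝ≥0) := by exact_mod_cast hm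
  rw [e] at hx
  exact absurd hx hm'.not_gt

theorem Rg.sat {K : ℕ} {x y : ℝ≥0} (h : Rg K x y) (φ : CC) (hφ : φ.maxConst ≤ K) :
    φ.sat x → φ.sat y := by
  induction φ with
  | lt m => exact (h m hφ).2.mp
  | gt m => exact (h m hφ).1.mp
  | eq m => exact h.eq_nat hφ
  | and φ ψ h1 h2 =>
    simp only [CC.maxConst, max_le_iff] at hφ
    exact fun hs => ⟨h1 hφ.1 hs.1, h2 hφ.2 hs.2⟩

theorem steps_append {A : Type} {M : TA A} (u z : TimedWord A) (c c' : M.Q × ℝ≥0) :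
    Steps M c (u ++ z) c' ↔ ∃ d, Steps M c u d ∧ Steps M d z c' := by
  induction u generalizing c with
  | nil =>
    constructor
    · intro h
      exact ⟨c, Steps.nil c, h⟩
    · rintro ⟨d, h1, h2⟩
      cases h1
      exact h2
  | cons p u ih =>
    constructor
    · intro h
      cases h with
      | cons θ hθ hsrc hlab hg hrest =>
        obtain ⟨d, h1, h2⟩ := (ih _).mp hrest
        exact ⟨d, Steps.cons θ hθ hsrc hlab hg h1, h2⟩
    · rintro ⟨d, h1, h2⟩
      cases h1 with
      | cons θ hθ hsrc hlab hg hrest =>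
        exact Steps.cons θ hθ hsrc hlab hg ((ih _).mpr ⟨d, hrest, h2⟩)

theorem clock_eq {A : Type} {M : TA A} {K : ℕ} (hS : M.IsStrict K) (hM : M.MaxConstLE K)
    {θ : TTrans M.Q A} (hθ : θ ∈ M.trans) {x : ℝ≥0} (hg : θ.guard.sat x) :
    (if θ.reset then 0 else x) = resetStep K x := by
  obtain ⟨h1, h2⟩ := hS θ hθ
  have h3 := hM θ hθ
  by_cases hr : θ.reset = true
  · obtain ⟨m, hm⟩ := h2.mpr hr
    rw [hm] at h3 hg
    have : ∃ m : ℕ, m ≤ K ∧ x = (m : ℝ≥0) := ⟨m, h3, hg⟩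
    simp [hr, resetStep, this]
  · have hne : ¬ ∃ m : ℕ, m ≤ K ∧ x = (m : ℝ≥0) := by
      rintro ⟨n, hn, rfl⟩
      rcases h1 with h1 | ⟨m, h1⟩ | h1
      · exact hr (h2.mp h1)
      · rw [h1] at hg
        obtain ⟨a, b⟩ := hg
        simp only [CC.sat] at a b
        have a' : m < n := by exact_mod_cast a
        have b' : n < m + 1 := by exact_mod_cast b
        omega
      · rw [h1] at hg
        simp only [CC.sat] at hg
        have : K < n := by exact_mod_cast hg
        omega
    simp [hr, resetStep, hne]

theorem steps_clock {A : Type} {M : TA A} {K : ℕ} (hS : M.IsStrict K) (hM : M.MaxConstLE K)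
    (w : TimedWord A) (c c' : M.Q × ℝ≥0) (h : Steps M c w c') :
    c'.2 = cKAux K c.2 (w.map Prod.fst) := by
  induction h with
  | nil c => rfl
  | cons θ hθ hsrc hlab hg hrest ih =>
    rw [ih]
    simp only [List.map_cons, cKAux]
    rw [clock_eq hS hM hθ hg]

/-- Acceptance of `w` from `(q, x)`. -/
def Acc {A : Type} (M : TA A) (q : M.Q) (x : ℝ≥0) (w : TimedWord A) : Prop :=
  w ∈ M.LangFrom (q, x)

theorem acc_nil {A : Type} {M : TA A} {q : M.Q} {x y : ℝ≥0} (h : Acc M q x []) :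
    Acc M q y [] := by
  obtain ⟨q', ν, hs, hf⟩ := h
  cases hs
  exact ⟨q, y, Steps.nil _, hf⟩

theorem acc_cons {A : Type} {M : TA A} {K : ℕ} (hS : M.IsStrict K) (hM : M.MaxConstLE K)
    {y y' t t' : ℝ≥0} {a : A} {w w' : TimedWord A} (hR : Rg K (y + t) (y' + t'))
    (ih : ∀ q, Acc M q (resetStep K (y + t)) w → Acc M q (resetStep K (y' + t')) w') (q : M.Q)
    (h : Acc M q y ((t, a) :: w)) : Acc M q y' ((t', a) :: w') := by
  obtain ⟨q', ν, hs, hf⟩ := h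
  cases hs with
  | cons θ hθ hsrc hlab hg hrest =>
    have hg' := hR.sat θ.guard (hM θ hθ) hg
    rw [clock_eq hS hM hθ hg] at hrest
    obtain ⟨q'', ν'', hs', hf'⟩ := ih θ.dst ⟨q', ν, hrest, hf⟩
    rw [← clock_eq hS hM hθ hg'] at hs'
    exact ⟨q'', ν'', Steps.cons θ hθ hsrc hlab hg' hs', hf'⟩

theorem acc_big {A : Type} {M : TA A} {K : ℕ} (hS : M.IsStrict K) (hM : M.MaxConstLE K)
    (w : TimedWord A) : ∀ (y y' : ℝ≥0), (K : ℝ≥0) < y → (K : ℝ≥0) < y' → ∀ q,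
    Acc M q y w → Acc M q y' w := by
  induction w with
  | nil => exact fun y y' _ _ q h => acc_nil h
  | cons p w ih =>
    obtain ⟨t, a⟩ := p
    intro y y' hy hy' q
    have h1 : (K : ℝ≥0) < y + t := lt_of_lt_of_le hy le_self_add
    have h2 : (K : ℝ≥0) < y' + t := lt_of_lt_of_le hy' le_self_add
    apply acc_cons hS hM (Rg.big h1 h2)
    rw [resetStep_big h1, resetStep_big h2]
    exact ih _ _ h1 h2

theorem half_cases {x : ℝ≥0} (h : Half x) : ∃ k : ℕ, x = k ∨ x = k + 1 / 2 := by
  obtain ⟨n, hn⟩ := h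
  rcases Nat.even_or_odd' n with ⟨k, rfl | rfl⟩
  · refine ⟨k, Or.inl ?_⟩
    push_cast at hn
    exact mul_left_cancel₀ two_ne_zero hn
  · refine ⟨k, Or.inr ?_⟩
    push_cast at hn
    apply mul_left_cancel₀ (two_ne_zero (α := ℝ≥0))
    rw [hn, mul_add]
    norm_num

theorem floor_nat_half (k : ℕ) : ⌊((k : ℝ≥0) + 1 / 2)⌋₊ = k := by
  rw [Nat.floor_eq_iff (by positivity)]
  refine ⟨le_self_add, ?_⟩
  gcongr
  rw [← NNReal.coe_lt_coe]
  norm_num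

theorem frac_nat (k : ℕ) : fracPart (k : ℝ≥0) = 0 := by simp [fracPart]

theorem frac_nat_half (k : ℕ) : fracPart ((k : ℝ≥0) + 1 / 2) = 1 / 2 := by
  rw [fracPart, floor_nat_half, add_tsub_cancel_left]

theorem half_frac {x : ℝ≥0} (h : Half x) : fracPart x = 0 ∨ fracPart x = 1 / 2 := by
  obtain ⟨k, rfl | rfl⟩ := half_cases h
  · exact Or.inl (frac_nat k)
  · exact Or.inr (frac_nat_half k)

theorem floor_add_frac (x : ℝ≥0) : (⌊x⌋₊ : ℝ≥0) + fracPart x = x := by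
  rw [fracPart, add_tsub_cancel_of_le (Nat.floor_le zero_le)]

theorem half_of_frac {x : ℝ≥0} (h : fracPart x = 0 ∨ fracPart x = 1 / 2) : Half x := by
  have e := floor_add_frac x
  rcases h with h | h
  · refine ⟨2 * ⌊x⌋₊, ?_⟩
    rw [h, add_zero] at e
    push_cast
    rw [e]
  · refine ⟨2 * ⌊x⌋₊ + 1, ?_⟩
    rw [h] at e
    conv_lhs => rw [← e]
    push_cast
    rw [mul_add]
    norm_num

theorem Half.add {x y : ℝ≥0} (hx : Half x) (hy : Half y) : Half (x + y) := by
  obtain ⟨n, hn⟩ := hx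
  obtain ⟨m, hm⟩ := hy
  exact ⟨n + m, by push_cast; rw [mul_add, hn, hm]⟩

theorem half_nat (k : ℕ) : Half (k : ℝ≥0) := ⟨2 * k, by push_cast; rfl⟩

theorem half_nat_half (k : ℕ) : Half ((k : ℝ≥0) + 1 / 2) :=
  ⟨2 * k + 1, by push_cast; rw [mul_add]; norm_num⟩

theorem half_diff {x t s : ℝ≥0} (hx : Half x) (hs : Half s) (e : x + t = s) : Half t := by
  obtain ⟨n, hn⟩ := hx
  obtain ⟨m, hm⟩ := hs
  have h : (n : ℝ≥0) + 2 * t = m := by rw [← hn, ← hm, ← e, mul_add]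
  have hnm : n ≤ m := by
    have : (n : ℝ≥0) ≤ m := by rw [← h]; exact le_self_add
    exact_mod_cast this
  refine ⟨m - n, ?_⟩
  have h' : ((m - n : ℕ) : ℝ≥0) + n = m := by exact_mod_cast Nat.sub_add_cancel hnm
  rw [← h, add_comm] at h'
  exact (add_left_cancel h').symm

theorem half_reset {K : ℕ} {x : ℝ≥0} (h : Half x) : Half (resetStep K x) := by
  unfold resetStep
  split
  · exact ⟨0, by simp⟩
  · exact h

theorem half_cKAux {A : Type} {K : ℕ} (u : TimedWord A) (hu : SigmaWord K u) :
    ∀ y, Half y → Half (cKAux K y (u.map Prod.fst)) := by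
  induction u with
  | nil => exact fun y hy => hy
  | cons p u ih =>
    intro y hy
    simp only [List.map_cons, cKAux]
    exact ih (fun q hq => hu q (List.mem_cons_of_mem _ hq)) _
      (half_reset (hy.add (half_of_frac (hu p List.mem_cons_self).1)))

theorem half_regEq {K : ℕ} {x y : ℝ≥0} (hx : Half x) (hy : Half y) (h : RegEq K x y) :
    x = y ∨ ((K : ℝ≥0) < x ∧ (K : ℝ≥0) < y) := by
  rcases h with ⟨h1, h2⟩ | h
  · left
    have hf : fracPart x = fracPart y := by
      rcases half_frac hx with a | a <;> rcases half_frac hy with b | b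
      · rw [a, b]
      · rw [h2.mp a, a]
      · rw [h2.mpr b, b]
      · rw [a, b]
    rw [← floor_add_frac x, ← floor_add_frac y, h1, hf]
  · exact Or.inr h

theorem exists_delay {K : ℕ} {y y' : ℝ≥0} (hR : Rg K y y') (hy' : Half y') (t : ℝ≥0) :
    ∃ t', IsSigmaK K t' ∧ Half t' ∧ Rg K (y + t) (y' + t') := by
  have key : ∀ t', Half t' → t' ≤ (K : ℝ≥0) + 1 / 2 → Rg K (y + t) (y' + t') →
      ∃ t', IsSigmaK K t' ∧ Half t' ∧ Rg K (y + t) (y' + t') :=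
    fun t' h1 h2 h3 => ⟨t', ⟨half_frac h1, h2⟩, h1, h3⟩
  have hhalf : (0 : ℝ≥0) < 1 / 2 := by positivity
  by_cases hK : (K : ℝ≥0) < y + t
  · refine key _ (half_nat_half K) le_rfl (Rg.big hK ?_)
    exact lt_of_lt_of_le (lt_add_of_pos_right _ hhalf) le_add_self
  · push Not at hK
    set s := y + t with hs
    have hys : y ≤ s := le_self_add
    have hms : (⌊s⌋₊ : ℝ≥0) ≤ s := Nat.floor_le zero_le
    have hsm : s < (⌊s⌋₊ : ℝ≥0) + 1 := Nat.lt_floor_add_one s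
    have hmK : ⌊s⌋₊ ≤ K := by exact_mod_cast hms.trans hK
    generalize ⌊s⌋₊ = m at hms hsm hmK
    have hmK' : (m : ℝ≥0) ≤ K := by exact_mod_cast hmK
    rcases hms.eq_or_lt with e | hlt
    · have hy'm : y' ≤ m := by
        rw [← not_lt, ← (hR m hmK).1, not_lt, e]
        exact hys
      obtain ⟨t', ht'⟩ := exists_add_of_le hy'm
      refine key t' (half_diff hy' (half_nat m) ht'.symm) ?_ ?_
      · calc t' ≤ y' + t' := le_add_self
          _ = m := ht'.symm
          _ ≤ K := hmK'
          _ ≤ _ := le_self_add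
      · rw [← ht', e]
        exact Rg.rfl' _
    · have hmK1 : m + 1 ≤ K := by
        have : (m : ℝ≥0) < K := lt_of_lt_of_le hlt hK
        exact_mod_cast this
      have hy'm : y' < ((m + 1 : ℕ) : ℝ≥0) := by
        rw [← (hR (m + 1) hmK1).2]
        push_cast
        exact lt_of_le_of_lt hys hsm
      have hle : y' ≤ (m : ℝ≥0) + 1 / 2 := by
        obtain ⟨n, hn⟩ := hy'
        rw [← NNReal.coe_lt_coe] at hy'm
        rw [← NNReal.coe_le_coe]
        have hn' : (2 : ℝ) * y' = n := by exact_mod_cast congrArg NNReal.toReal hn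
        push_cast at hy'm ⊢
        have h2 : (n : ℝ) < (2 * m + 2 : ℕ) := by push_cast; linarith
        have h3 : n < 2 * m + 2 := by exact_mod_cast h2
        have h4 : n ≤ 2 * m + 1 := by omega
        have h5 : (n : ℝ) ≤ (2 * m + 1 : ℕ) := by exact_mod_cast h4
        push_cast at h5
        linarith
      obtain ⟨t', ht'⟩ := exists_add_of_le hle
      refine key t' (half_diff hy' (half_nat_half m) ht'.symm) ?_ ?_
      · calc t' ≤ y' + t' := le_add_self
          _ = m + 1 / 2 := ht'.symm
          _ ≤ K + 1 / 2 := by gcongr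
      · rw [← ht']
        intro n hn
        have hl1 : (m : ℝ≥0) < (m : ℝ≥0) + 1 / 2 := lt_add_of_pos_right _ hhalf
        have hl2 : (m : ℝ≥0) + 1 / 2 < (m : ℝ≥0) + 1 := by
          gcongr
          rw [← NNReal.coe_lt_coe]
          norm_num
        rcases Nat.lt_or_ge m n with hc | hc
        · have hc' : (m : ℝ≥0) + 1 ≤ n := by exact_mod_cast hc
          have a1 := lt_of_lt_of_le hsm hc'
          have a2 := lt_of_lt_of_le hl2 hc'
          exact ⟨⟨fun h => absurd h a1.not_gt, fun h => absurd h a2.not_gt⟩,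
            ⟨fun _ => a2, fun _ => a1⟩⟩
        · have hc' : (n : ℝ≥0) ≤ m := by exact_mod_cast hc
          have a1 := lt_of_le_of_lt hc' hlt
          have a2 := lt_of_le_of_lt hc' hl1
          exact ⟨⟨fun _ => a2, fun _ => a1⟩,
            ⟨fun h => absurd h a1.not_gt, fun h => absurd h a2.not_gt⟩⟩

theorem exists_half_word {A : Type} {M : TA A} {K : ℕ} (hS : M.IsStrict K)
    (hM : M.MaxConstLE K) (z : TimedWord A) : ∀ (y y' : ℝ≥0), Rg K y y' → Half y' →
    ∃ z', SigmaWord K z' ∧ ∀ q, Acc M q y z ↔ Acc M q y' z' := by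
  induction z with
  | nil =>
    exact fun y y' _ _ => ⟨[], fun p hp => absurd hp List.not_mem_nil,
      fun q => ⟨acc_nil, acc_nil⟩⟩
  | cons p z ih =>
    obtain ⟨t, a⟩ := p
    intro y y' hR hy'
    obtain ⟨t', h1, h2, h3⟩ := exists_delay hR hy' t
    obtain ⟨z', hz', hq⟩ := ih _ _ h3.reset (half_reset (hy'.add h2))
    refine ⟨(t', a) :: z', ?_, fun q => ⟨?_, ?_⟩⟩
    · intro p hp
      rcases List.mem_cons.mp hp with rfl | hp
      · exact h1
      · exact hz' p hp
    · exact acc_cons hS hM h3 (fun q => (hq q).mp) q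
    · exact acc_cons hS hM h3.symm' (fun q => (hq q).mpr) q

theorem tauStep_self {K : ℕ} (y t : ℝ≥0) : tauStep K y y t = t := by
  unfold tauStep
  split
  · rfl
  · have hlt : ∀ x : ℝ≥0, fracPart x < 1 := by
      intro x
      have h2 := Nat.lt_floor_add_one x
      nth_rw 1 [← floor_add_frac x] at h2
      exact lt_of_add_lt_add_left h2
    have hpos : 1 - fracPart y ≠ 0 := (tsub_pos_of_lt (hlt y)).ne'
    have : fScale (1 - fracPart y) (1 - fracPart y) (fracPart t) = fracPart t := by
      unfold fScale
      split
      · rw [div_self hpos, one_mul]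
      · rename_i hn
        push Not at hn
        have h3 : 1 - (1 - fracPart y) ≠ 0 := (tsub_pos_of_lt (hn.trans (hlt t))).ne'
        rw [div_self h3, one_mul, add_tsub_cancel_of_le hn.le]
    rw [this, floor_add_frac]

theorem tauWAux_self {A : Type} {K : ℕ} (w : TimedWord A) : ∀ y, tauWAux K y y w = w := by
  induction w with
  | nil => exact fun y => rfl
  | cons p w ih =>
    obtain ⟨t, a⟩ := p
    intro y
    simp only [tauWAux, tauStep_self, ih]

theorem tauWAux_big {A : Type} {K : ℕ} (w : TimedWord A) : ∀ y y' : ℝ≥0, (K : ℝ≥0) < y →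
    (K : ℝ≥0) < y' → tauWAux K y y' w = w := by
  induction w with
  | nil => exact fun y y' _ _ => rfl
  | cons p w ih =>
    obtain ⟨t, a⟩ := p
    intro y y' hy hy'
    have e : tauStep K y y' t = t := if_pos (Or.inr ⟨hy, hy'⟩)
    have h1 : (K : ℝ≥0) < y + t := lt_of_lt_of_le hy le_self_add
    have h2 : (K : ℝ≥0) < y' + t := lt_of_lt_of_le hy' le_self_add
    simp only [tauWAux, e]
    rw [resetStep_big h1, resetStep_big h2, ih _ _ h1 h2]

theorem tauW_id {A : Type} {K : ℕ} {x x' : ℝ≥0}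
    (h : x = x' ∨ ((K : ℝ≥0) < x ∧ (K : ℝ≥0) < x')) :
    (tauW K x x' : TimedWord A → TimedWord A) = id := by
  funext w
  rcases h with rfl | ⟨h1, h2⟩
  · exact tauWAux_self w _
  · rw [tauW, resetStep_big h1, resetStep_big h2]
    exact tauWAux_big w _ _ h1 h2

theorem lang_append {A : Type} {M : TA A} {K : ℕ} (hS : M.IsStrict K) (hM : M.MaxConstLE K)
    (u z : TimedWord A) :
    u ++ z ∈ M.Lang ↔ ∃ q, Steps M (M.init, 0) u (q, cKW K u) ∧ Acc M q (cKW K u) z := by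
  constructor
  · rintro ⟨q', ν', hs, hf⟩
    obtain ⟨⟨q, ν⟩, h1, h2⟩ := (steps_append u z _ _).mp hs
    have e : ν = cKW K u := steps_clock hS hM u _ _ h1
    subst e
    exact ⟨q, h1, q', ν', h2, hf⟩
  · rintro ⟨q, h1, q', ν', h2, hf⟩
    exact ⟨q', ν', (steps_append u z _ _).mpr ⟨_, h1, h2⟩, hf⟩

theorem cKTop_iff {A : Type} {K : ℕ} (u v : TimedWord A) :
    cKTop K u = cKTop K v ↔
      (cKW K u = cKW K v ∨ ((K : ℝ≥0) < cKW K u ∧ (K : ℝ≥0) < cKW K v)) := by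
  unfold cKTop
  by_cases h1 : cKW K u ≤ (K : ℝ≥0) <;> by_cases h2 : cKW K v ≤ (K : ℝ≥0)
  · rw [if_pos h1, if_pos h2]
    constructor
    · exact fun h => Or.inl (WithTop.coe_injective h)
    · rintro (h | ⟨h, -⟩)
      · rw [h]
      · exact absurd h h1.not_gt
  · rw [if_pos h1, if_neg h2]
    constructor
    · exact fun h => absurd h (WithTop.coe_ne_top)
    · rintro (h | ⟨h, -⟩)
      · exact absurd (h ▸ h1) h2
      · exact absurd h h1.not_gt
  · rw [if_neg h1, if_pos h2]
    constructor
    · exact fun h => absurd h.symm (WithTop.coe_ne_top)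
    · rintro (h | ⟨-, h⟩)
      · exact absurd (h ▸ h2) h1
      · exact absurd h h2.not_gt
  · rw [if_neg h1, if_neg h2]
    exact ⟨fun _ => Or.inr ⟨not_le.mp h1, not_le.mp h2⟩, fun _ => rfl⟩

/-- on small half-integral words, `≈^{L,K}` is characterized by
`c^K_⊤` and membership of `Σ_K`-extensions. -/
theorem statement18 {A : Type} [Finite A] (K : ℕ) (L : Set (TimedWord A))
    (B : TA A) (hB : IsKAcceptor B K) (hL : B.Lang = L)
    (u v : TimedWord A) (hu : SigmaWord K u) (hv : SigmaWord K v) :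
    ApproxLK L K u v ↔
      (cKTop K u = cKTop K v ∧
        ∀ z : TimedWord A, SigmaWord K z → (u ++ z ∈ L ↔ v ++ z ∈ L)) := by
  subst hL
  obtain ⟨-, -, -, -, hS, hM, -⟩ := hB
  have hcu : Half (cKW K u) := half_cKAux u hu 0 ⟨0, by simp⟩
  have hcv : Half (cKW K v) := half_cKAux v hv 0 ⟨0, by simp⟩
  rw [cKTop_iff]
  constructor
  · rintro ⟨hR, hres⟩
    have hc := half_regEq hcu hcv hR
    refine ⟨hc, fun z _ => ?_⟩
    rw [tauW_id hc, Set.image_id] at hres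
    exact Set.ext_iff.mp hres z
  · rintro ⟨hc, hz⟩
    refine ⟨?_, ?_⟩
    · rcases hc with h | h
      · exact Or.inl (by rw [h]; exact ⟨rfl, Iff.rfl⟩)
      · exact Or.inr h
    · rw [tauW_id hc, Set.image_id]
      ext z
      obtain ⟨z', hz', hq⟩ := exists_half_word (M := B) hS hM z _ _ (Rg.rfl' (cKW K u)) hcu
      have hqv : ∀ q, Acc B q (cKW K v) z ↔ Acc B q (cKW K v) z' := by
        rcases hc with h | ⟨h1, h2⟩
        · rw [← h]
          exact hq
        · intro q
          exact ⟨fun h => acc_big hS hM z' _ _ h1 h2 q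
              ((hq q).mp (acc_big hS hM z _ _ h2 h1 q h)),
            fun h => acc_big hS hM z _ _ h1 h2 q
              ((hq q).mpr (acc_big hS hM z' _ _ h2 h1 q h))⟩
      have hzz := hz z' hz'
      change u ++ z ∈ B.Lang ↔ v ++ z ∈ B.Lang
      rw [lang_append hS hM, lang_append hS hM] at hzz ⊢
      simp only [hq, hqv]
      exact hzz

end IRTA
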